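/- arXiv:2312.10706 — 2 statements merged into one kernel-verified Lean document; each statement's English description precedes it below -/
import Mathlib

section
/- Let Y_0, Y_1, Y_2 be jointly Gaussian random vectors with mean zero, where Y_1 and Y_2 take values in ℝ^d and Y_0 takes values in ℝ^p, and suppose Cov(Y_1) is invertible. If Y_2 is conditionally independent of Y_0 given Y_1, and Cov(Y_2, Y_1) = P·Cov(Y_1, Y_1) for some d×d real matrix P, then Cov(Y_2, Y_0) = P·Cov(Y_1, Y_0). -/
open MeasureTheory ProbabilityTheory

/-- The cross-covariance matrix of two random vectors: entry `(i, j)` is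
`E[Xᵢ Yⱼ] − E[Xᵢ] E[Yⱼ]`. -/
noncomputable def covM {Ω : Type*} [MeasurableSpace Ω] (μ : Measure Ω)
    {ι κ : Type*} (X : Ω → ι → ℝ) (Y : Ω → κ → ℝ) : Matrix ι κ ℝ :=
  Matrix.of fun i j =>
    (∫ ω, X ω i * Y ω j ∂μ) - (∫ ω, X ω i ∂μ) * (∫ ω, Y ω j ∂μ)

/-- A random vector (indexed by a finite type) is (jointly) Gaussian if every linear
combination of its components has a Gaussian distribution on `ℝ`. -/
def IsGaussianVec {Ω : Type*} [MeasurableSpace Ω] (μ : Measure Ω)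
    {ι : Type*} [Fintype ι] (X : Ω → ι → ℝ) : Prop :=
  ∀ u : ι → ℝ, ∃ (a : ℝ) (s : NNReal),
    Measure.map (fun ω => ∑ i, u i * X ω i) μ = gaussianReal a s


/-- A measurable Gaussian vector in the sense of `IsGaussianVec` has a Gaussian law. -/
lemma IsGaussianVec.hasGaussianLaw {Ω ι : Type*} [MeasurableSpace Ω] [Fintype ι]
    {μ : Measure Ω} {X : Ω → ι → ℝ} (hX : Measurable X) (h : IsGaussianVec μ X) :
    HasGaussianLaw X μ where
  isGaussian_map := isGaussian_of_map_eq_gaussianReal fun L => by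
    classical
    obtain ⟨a, s, has⟩ := h fun i => L fun j => if i = j then 1 else 0
    refine ⟨a, s, ?_⟩
    rw [Measure.map_map (by fun_prop) hX, ← has]
    congr 1
    ext ω
    rw [Function.comp_apply, ← ContinuousLinearMap.coe_coe, LinearMap.pi_apply_eq_sum_univ]
    simp [mul_comm]

/-- The conditional expectation of a product of conditionally independent real random variables
is the product of the conditional expectations. -/
lemma ProbabilityTheory.CondIndepFun.condExp_mul {Ω : Type*} {m' mΩ : MeasurableSpace Ω}
    [StandardBorelSpace Ω] {hm' : m' ≤ mΩ} {μ : Measure Ω} [IsFiniteMeasure μ] {X Y : Ω → ℝ}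
    (h : CondIndepFun m' hm' X Y μ) (hXm : Measurable X) (hYm : Measurable Y)
    (hX : Integrable X μ) (hY : Integrable Y μ) (hXY : Integrable (X * Y) μ) :
    μ[X * Y | m'] =ᵐ[μ] μ[X | m'] * μ[Y | m'] := by
  have hprod := ae_of_ae_trim hm' ((condIndepFun_iff_map_prod_eq_prod_map_map hXm hYm).1 h)
  filter_upwards [hprod, condExp_ae_eq_integral_condExpKernel hm' hXY,
    condExp_ae_eq_integral_condExpKernel hm' hX,
    condExp_ae_eq_integral_condExpKernel hm' hY] with ω hω h₁ h₂ h₃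
  have hind : IndepFun X Y (condExpKernel μ m' ω) := by
    rw [indepFun_iff_map_prod_eq_prod_map_map hXm.aemeasurable hYm.aemeasurable]
    rwa [Kernel.map_apply _ (hXm.prodMk hYm), Kernel.prod_apply, Kernel.map_apply _ hXm,
      Kernel.map_apply _ hYm] at hω
  rw [Pi.mul_apply, h₁, h₂, h₃]
  exact hind.integral_mul_eq_mul_integral hXm.aestronglyMeasurable hYm.aestronglyMeasurable

/-- If `X` and `Y` are conditionally independent given `m'` and `Z` is a version of
`μ[X | m']`, then `X` may be replaced by `Z` in `μ[X * Y]`. -/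
lemma ProbabilityTheory.CondIndepFun.integral_mul_eq_of_condExp_eq {Ω : Type*}
    {m' mΩ : MeasurableSpace Ω} [StandardBorelSpace Ω] {hm' : m' ≤ mΩ} {μ : Measure Ω}
    [IsFiniteMeasure μ] {X Y Z : Ω → ℝ} (h : CondIndepFun m' hm' X Y μ)
    (hXm : Measurable X) (hYm : Measurable Y) (hZm : StronglyMeasurable[m'] Z)
    (hX : MemLp X 2 μ) (hY : MemLp Y 2 μ) (hZ : MemLp Z 2 μ) (hXZ : μ[X | m'] =ᵐ[μ] Z) :
    ∫ ω, X ω * Y ω ∂μ = ∫ ω, Z ω * Y ω ∂μ := by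
  have hYi := hY.integrable one_le_two
  have hmul : μ[X * Y | m'] =ᵐ[μ] μ[Z * Y | m'] := calc
    μ[X * Y | m'] =ᵐ[μ] μ[X | m'] * μ[Y | m'] :=
      h.condExp_mul hXm hYm (hX.integrable one_le_two) hYi (hX.integrable_mul hY)
    _ =ᵐ[μ] Z * μ[Y | m'] := hXZ.mul .rfl
    _ =ᵐ[μ] μ[Z * Y | m'] :=
      (condExp_mul_of_stronglyMeasurable_left hZm (hZ.integrable_mul hY) hYi).symm
  calc ∫ ω, X ω * Y ω ∂μ = ∫ ω, (μ[X * Y | m']) ω ∂μ := (integral_condExp hm').symm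
    _ = ∫ ω, (μ[Z * Y | m']) ω ∂μ := integral_congr_ae hmul
    _ = ∫ ω, Z ω * Y ω ∂μ := integral_condExp hm'

/-- If `X` and `Y` are centred and jointly Gaussian and `P` is a matrix with
`E[X Yᵀ] = P E[Y Yᵀ]`, then `E[X | Y] = P Y`. -/
lemma ProbabilityTheory.HasGaussianLaw.condExp_eq_sum_of_covM {Ω ι κ : Type*}
    [mΩ : MeasurableSpace Ω] [Fintype ι] [Fintype κ] {μ : Measure Ω}
    [IsProbabilityMeasure μ] {X : Ω → ι → ℝ} {Y : Ω → κ → ℝ}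
    (h : HasGaussianLaw (fun ω => (X ω, Y ω)) μ) (hXm : Measurable X) (hYm : Measurable Y)
    (hX0 : ∀ i, ∫ ω, X ω i ∂μ = 0) (hY0 : ∀ k, ∫ ω, Y ω k ∂μ = 0) (P : Matrix ι κ ℝ)
    (hcov : covM μ X Y = P * covM μ Y Y) (i : ι) :
    μ[fun ω => X ω i | MeasurableSpace.comap Y inferInstance]
      =ᵐ[μ] fun ω => ∑ k, P i k * Y ω k := by
  have hX2 i : MemLp (fun ω => X ω i) 2 μ := (h.fst.eval (X := fun i ω => X ω i) i).memLp_two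
  have hY2 k : MemLp (fun ω => Y ω k) 2 μ := (h.snd.eval (X := fun i ω => Y ω i) k).memLp_two
  have hPY i : MemLp (fun ω => ∑ k, P i k * Y ω k) 2 μ :=
    memLp_finsetSum _ fun k _ => (hY2 k).const_mul _
  have hR0 i : ∫ ω, (X ω i - ∑ k, P i k * Y ω k) ∂μ = 0 := by
    rw [integral_sub ((hX2 i).integrable one_le_two) ((hPY i).integrable one_le_two),
      integral_finsetSum _ fun k _ => ((hY2 k).integrable one_le_two).const_mul _]
    simp [integral_const_mul, hX0, hY0]
  let L : (ι → ℝ) × (κ → ℝ) →L[ℝ] (ι → ℝ) × (κ → ℝ) :=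
    (ContinuousLinearMap.pi fun i =>
      (ContinuousLinearMap.proj i).comp (ContinuousLinearMap.fst ℝ _ _) -
        ∑ k, P i k • (ContinuousLinearMap.proj k).comp (ContinuousLinearMap.snd ℝ _ _)).prod
      (ContinuousLinearMap.snd ℝ _ _)
  have hRY : HasGaussianLaw (fun ω => (fun i => X ω i - ∑ k, P i k * Y ω k, fun k => Y ω k)) μ := by
    have hL : (fun ω => (fun i => X ω i - ∑ k, P i k * Y ω k, fun k => Y ω k))
        = fun ω => L (X ω, Y ω) := by
      funext ω
      ext <;> simp [L]
    rw [hL]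
    exact h.map_fun L
  have hind := hRY.indepFun_of_covariance_eval (X := fun i ω => X ω i - ∑ k, P i k * Y ω k)
    (Y := fun k ω => Y ω k) fun i j => by
      have hij := congrFun (congrFun hcov i) j
      simp only [covM, Matrix.mul_apply, Matrix.of_apply, hX0, hY0, mul_zero, sub_zero] at hij
      have hsum : covariance (fun ω => ∑ k, P i k * Y ω k) (fun ω => Y ω j) μ
          = ∑ k, P i k * covariance (fun ω => Y ω k) (fun ω => Y ω j) μ := by
        rw [covariance_fun_sum_left (fun k => (hY2 k).const_mul _) (hY2 j)]
        simp [covariance_const_mul_left]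
      rw [covariance_fun_sub_left (hX2 i) (hPY i) (hY2 j), hsum,
        covariance_eq_sub (hX2 i) (hY2 j)]
      simp [covariance_eq_sub (hY2 _) (hY2 j), hX0, hY0, hij]
  have hYc : Measurable[MeasurableSpace.comap Y inferInstance] Y := comap_measurable Y
  have hPYm : StronglyMeasurable[MeasurableSpace.comap Y inferInstance]
      fun ω => ∑ k, P i k * Y ω k :=
    (Finset.measurable_fun_sum _ fun k _ =>
      ((measurable_pi_apply k).comp hYc).const_mul _).stronglyMeasurable
  have hR : μ[fun ω => X ω i - ∑ k, P i k * Y ω k | MeasurableSpace.comap Y inferInstance]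
      =ᵐ[μ] fun _ => 0 := by
    have hRm : Measurable fun ω => X ω i - ∑ k, P i k * Y ω k := by fun_prop
    rw [← hR0 i]
    exact condExp_indep_eq hRm.comap_le hYm.comap_le
      (comap_measurable _).stronglyMeasurable
      (hind.comp (measurable_pi_apply i) measurable_id)
  filter_upwards [hR, condExp_sub ((hX2 i).integrable one_le_two)
    ((hPY i).integrable one_le_two) (MeasurableSpace.comap Y inferInstance)] with ω h₁ h₂
  rw [condExp_of_stronglyMeasurable hYm.comap_le hPYm ((hPY i).integrable one_le_two)] at h₂
  exact sub_eq_zero.1 (h₂.symm.trans h₁)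

/-- For jointly Gaussian mean-zero random vectors `Y₀, Y₁, Y₂` with `Cov(Y₁)`
invertible, if `Y₂` is conditionally independent of `Y₀` given `Y₁` and
`Cov(Y₂,Y₁) = P · Cov(Y₁,Y₁)`, then `Cov(Y₂,Y₀) = P · Cov(Y₁,Y₀)`. -/
theorem gaussian_condIndep_cov_propagates
    {Ω : Type*} [MeasurableSpace Ω] [StandardBorelSpace Ω]
    (Pr : Measure Ω) [IsProbabilityMeasure Pr]
    {d p : ℕ}
    (Y0 : Ω → Fin p → ℝ) (Y1 Y2 : Ω → Fin d → ℝ)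
    (hY0 : Measurable Y0) (hY1 : Measurable Y1) (hY2 : Measurable Y2)
    (hGauss : IsGaussianVec Pr
      (fun ω => Sum.elim (Sum.elim (Y0 ω) (Y1 ω)) (Y2 ω)))
    (hm0 : ∀ i, ∫ ω, Y0 ω i ∂Pr = 0)
    (hm1 : ∀ i, ∫ ω, Y1 ω i ∂Pr = 0)
    (hm2 : ∀ i, ∫ ω, Y2 ω i ∂Pr = 0)
    (hY1inv : IsUnit (covM Pr Y1 Y1))
    (P : Matrix (Fin d) (Fin d) ℝ)
    (hCI : CondIndepFun (MeasurableSpace.comap Y1 inferInstance) hY1.comap_le Y2 Y0 Pr)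
    (hcov : covM Pr Y2 Y1 = P * covM Pr Y1 Y1) :
    covM Pr Y2 Y0 = P * covM Pr Y1 Y0 := by
  have hG := hGauss.hasGaussianLaw (by
    refine measurable_pi_lambda _ ?_
    rintro ((i | i) | i) <;> simp only [Sum.elim_inl, Sum.elim_inr] <;> fun_prop)
  have h02 i : MemLp (fun ω => Y0 ω i) 2 Pr :=
    (hG.map_fun (.proj (R := ℝ) (φ := fun _ => ℝ) (Sum.inl (Sum.inl i)))).memLp_two
  have h12 i : MemLp (fun ω => Y1 ω i) 2 Pr :=
    (hG.map_fun (.proj (R := ℝ) (φ := fun _ => ℝ) (Sum.inl (Sum.inr i)))).memLp_two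
  have h22 i : MemLp (fun ω => Y2 ω i) 2 Pr :=
    (hG.map_fun (.proj (R := ℝ) (φ := fun _ => ℝ) (Sum.inr i))).memLp_two
  have h21 : HasGaussianLaw (fun ω => (Y2 ω, Y1 ω)) Pr :=
    hG.map_fun ((ContinuousLinearMap.pi fun i => .proj (Sum.inr i)).prod
      (ContinuousLinearMap.pi fun i => .proj (Sum.inl (Sum.inr i))))
  have hY1c : Measurable[MeasurableSpace.comap Y1 inferInstance] Y1 := comap_measurable Y1
  ext i j
  have key := (hCI.comp (measurable_pi_apply i) (measurable_pi_apply j)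
    ).integral_mul_eq_of_condExp_eq (by fun_prop) (by fun_prop)
    (Finset.measurable_fun_sum _ fun k _ =>
      ((measurable_pi_apply k).comp hY1c).const_mul _).stronglyMeasurable
    (h22 i) (h02 j) (memLp_finsetSum _ fun k _ => (h12 k).const_mul _)
    (h21.condExp_eq_sum_of_covM hY2 hY1 hm2 hm1 P hcov i)
  simp only [Function.comp_apply, Finset.sum_mul, mul_assoc] at key
  have hint k : Integrable (fun ω => P i k * (Y1 ω k * Y0 ω j)) Pr :=
    ((h12 k).integrable_mul (h02 j)).const_mul _
  rw [integral_finsetSum _ fun k _ => hint k] at key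
  simpa [covM, Matrix.mul_apply, hm0, hm1, hm2, integral_const_mul] using key
end

section
/- (Proposition 1, closure-under-margins part.) Let d, G, T, k be positive integers with T ≥ k+2, let v : {1, …, T} → {1, …, G} be a regime sequence, let P = diag(ρ_1, …, ρ_d) with ρ_i ∈ (−1, 1), and let I = {i_1, …, i_m} be a nonempty subset of {1, …, d}. Let Y_1, …, Y_T be random vectors with values in ℝ^d, jointly Gaussian with mean zero, whose joint covariance matrix is positive definite, and write Y_{I,t} = (Y_{i_1,t}, …, Y_{i_m,t}). Assume: (i) [within-regime Markov order k−1 for the sub-process] for all t and all m' with k ≤ m' ≤ t−1 such that v_{t−m'} = ⋯ = v_t, the vector Y_{I,t} is conditionally independent of (Y_{I,t−m'}, …, Y_{I,t−k}) given (Y_{I,t−k+1}, …, Y_{I,t−1}); (ii) for every switch time t* (2 ≤ t* ≤ T with v_{t*} ≠ v_{t*−1}): (a) Cov(Y_{t*}, Y_{t*−1}) = P·Cov(Y_{t*−1}, Y_{t*−1}); (b) Y_{t*} is conditionally independent of Y_s given Y_{t*−1} for every 1 ≤ s ≤ t*−2; (c) Cov(Y_{t*+j}, Y_s) = 0 for every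 j ≥ 1 with t*+j ≤ T and every 1 ≤ s ≤ t*−1. Then the sub-process is Markov of order k: for every t with k+2 ≤ t ≤ T, the vector Y_{I,t} is conditionally independent of (Y_{I,1}, …, Y_{I,t−k−1}) given (Y_{I,t−k}, …, Y_{I,t−1}). -/
open MeasureTheory ProbabilityTheory

section Projection

open LinearMap (BilinForm)

/-- Orthogonal projection onto a subspace for a positive definite symmetric form. -/
lemma exists_mem_forall_form_sub_eq_zero {V : Type*} [AddCommGroup V] [Module ℝ V]
    [FiniteDimensional ℝ V] (B : BilinForm ℝ V) (hsymm : B.IsSymm)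
    (hpos : ∀ x, x ≠ 0 → 0 < B x x) (U : Submodule ℝ V) (x : V) :
    ∃ p ∈ U, ∀ u ∈ U, B (x - p) u = 0 := by
  have hrefl : B.IsRefl := hsymm.isRefl
  have hdisj : Disjoint U (B.orthogonal U) := by
    rw [Submodule.disjoint_def]
    intro u hu hu'
    by_contra h
    exact (hpos u h).ne' (hu' u hu)
  have hcompl := (B.isCompl_orthogonal_iff_disjoint hrefl).2 hdisj
  obtain ⟨p, hp, q, hq, hpq⟩ := Submodule.mem_sup.1 (hcompl.sup_eq_top ▸ Submodule.mem_top (x := x))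
  refine ⟨p, hp, fun u hu => ?_⟩
  rw [← hpq, add_sub_cancel_left]
  exact hrefl _ _ (hq u hu)

/-- The linear algebra behind the closure under margins: if the sub-process indexed by `e` has
within-regime order `k - 1` and the innovations at the switch times are orthogonal to the past,
then the best linear predictor of the sub-process only involves its last `k` values. -/
lemma exists_predictor_of_regime_switching {V ι κ γ : Type*} [AddCommGroup V] [Module ℝ V]
    (B : BilinForm ℝ V)
    (hproj : ∀ (U : Submodule ℝ V) (x : V), ∃ p ∈ U, ∀ u ∈ U, B (x - p) u = 0)
    (y : ℕ → ι → V) (v : ℕ → γ) (ρ : ι → ℝ) (T k : ℕ) (hk : 0 < k) (e : κ → ι)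
    (hinnov : ∀ τ, 2 ≤ τ → τ ≤ T → v τ ≠ v (τ - 1) → ∀ i s i', 1 ≤ s → s + 1 ≤ τ →
      B (y τ i - ρ i • y (τ - 1) i) (y s i') = 0)
    (hcross : ∀ τ, 2 ≤ τ → τ ≤ T → v τ ≠ v (τ - 1) → ∀ r, τ < r → r ≤ T →
      ∀ s, 1 ≤ s → s + 1 ≤ τ → ∀ i i', B (y r i) (y s i') = 0)
    (hwithin : ∀ t l, t ≤ T → k ≤ l → l + 1 ≤ t → (∀ s, t - l ≤ s → s ≤ t → v s = v t) →
      ∀ j, ∃ p ∈ Submodule.span ℝ {x | ∃ s j', t - k + 1 ≤ s ∧ s < t ∧ x = y s (e j')},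
        ∀ s, t - l ≤ s → s < t → ∀ j', B (y t (e j) - p) (y s (e j')) = 0)
    (t : ℕ) (hkt : k + 2 ≤ t) (htT : t ≤ T) (j : κ) :
    ∃ p ∈ Submodule.span ℝ {x | ∃ s j', t - k ≤ s ∧ s < t ∧ x = y s (e j')},
      ∀ s, 1 ≤ s → s < t → ∀ j', B (y t (e j) - p) (y s (e j')) = 0 := by
  classical
  -- the start `τ` of the regime containing `t`
  have hex : ∃ τ, 1 ≤ τ ∧ ∀ s, τ ≤ s → s ≤ t → v s = v t :=
    ⟨t, by omega, fun s h1 h2 => by rw [le_antisymm h2 h1]⟩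
  obtain ⟨τ, hτ1, hτt, hconst, hτ⟩ : ∃ τ, 1 ≤ τ ∧ τ ≤ t ∧ (∀ s, τ ≤ s → s ≤ t → v s = v t) ∧
      (τ = 1 ∨ (2 ≤ τ ∧ v τ ≠ v (τ - 1))) := by
    have hspec := Nat.find_spec hex
    have hle : Nat.find hex ≤ t :=
      Nat.find_min' hex ⟨by omega, fun s h1 h2 => by rw [le_antisymm h2 h1]⟩
    refine ⟨Nat.find hex, hspec.1, hle, hspec.2, ?_⟩
    by_contra! hcon
    have h2 : 2 ≤ Nat.find hex := by have := hspec.1; have := hcon.1; omega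
    refine Nat.find_min hex (m := Nat.find hex - 1) (by omega) ⟨by omega, fun s h3 h4 => ?_⟩
    rcases Nat.lt_or_ge s (Nat.find hex) with h5 | h5
    · have : s = Nat.find hex - 1 := by omega
      rw [this, ← hcon.2 h2, hspec.2 _ le_rfl hle]
    · exact hspec.2 s h5 h4
  set W := Submodule.span ℝ {x | ∃ s j', t - k ≤ s ∧ s < t ∧ x = y s (e j')} with hW
  have hmemW : ∀ s j', t - k ≤ s → s < t → y s (e j') ∈ W := fun s j' h1 h2 =>
    Submodule.subset_span ⟨s, j', h1, h2, rfl⟩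
  have hperp : ∀ (S : Set V) (z : V), (∀ x ∈ S, B x z = 0) →
      ∀ x ∈ Submodule.span ℝ S, B x z = 0 := fun S z h x hx => by
    have : Submodule.span ℝ S ≤ LinearMap.ker (B.flip z) := Submodule.span_le.2 h
    exact this hx
  rcases Nat.lt_or_ge (t - k) τ with hτk | hτk
  swap
  · -- the whole window lies in the current regime
    obtain ⟨p, hp, hp'⟩ := hwithin t (t - τ) htT (by omega) (by omega)
      (fun s h1 h2 => hconst s (by omega) h2) j
    refine ⟨p, Submodule.span_mono ?_ hp, fun s h1 h2 j' => ?_⟩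
    · rintro _ ⟨s, j', h1, h2, rfl⟩
      exact ⟨s, j', by omega, h2, rfl⟩
    rcases Nat.lt_or_ge s τ with h3 | h3
    · obtain ⟨hτ2, hsw⟩ := hτ.resolve_left (by omega)
      have hc := hcross τ hτ2 (by omega) hsw
      rw [map_sub, LinearMap.sub_apply, hc t (by omega) htT s h1 h3, zero_sub, neg_eq_zero]
      refine hperp _ _ ?_ p hp
      rintro _ ⟨r, i, h4, h5, rfl⟩
      exact hc r (by omega) (by omega) s h1 h3 _ _
    · exact hp' s (by omega) h2 j'
  obtain ⟨hτ2, hsw⟩ := hτ.resolve_left (by omega)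
  have hc := hcross τ hτ2 (by omega) hsw
  have hi := hinnov τ hτ2 (by omega) hsw
  rcases hτt.eq_or_lt with rfl | hlt
  · exact ⟨ρ (e j) • y (τ - 1) (e j), W.smul_mem _ (hmemW _ _ (by omega) (by omega)),
      fun s h1 h2 j' => hi (e j) s _ h1 h2⟩
  · -- project onto the span of the innovation at `τ` and the later values
    set S : Set V := {x | (∃ j', x = y τ (e j') - ρ (e j') • y (τ - 1) (e j')) ∨
      ∃ s j', τ < s ∧ s < t ∧ x = y s (e j')} with hS
    obtain ⟨p, hp, hp'⟩ := hproj (Submodule.span ℝ S) (y t (e j))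
    have hpast : ∀ s, 1 ≤ s → s < τ → ∀ j', B (y t (e j) - p) (y s (e j')) = 0 := by
      intro s h1 h2 j'
      rw [map_sub, LinearMap.sub_apply, hc t hlt htT s h1 h2, zero_sub, neg_eq_zero]
      refine hperp S _ ?_ p hp
      rintro _ (⟨i, rfl⟩ | ⟨r, i, h4, h5, rfl⟩)
      · exact hi _ s _ h1 h2
      · exact hc r h4 (by omega) s h1 h2 _ _
    refine ⟨p, Submodule.span_le.2 ?_ hp, fun s h1 h2 j' => ?_⟩
    · rintro _ (⟨i, rfl⟩ | ⟨r, i, h4, h5, rfl⟩)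
      · exact W.sub_mem (hmemW _ _ (by omega) hlt)
          (W.smul_mem _ (hmemW _ _ (by omega) (by omega)))
      · exact hmemW _ _ (by omega) h5
    rcases lt_trichotomy s τ with h3 | rfl | h3
    · exact hpast s h1 h3 j'
    · rw [← sub_add_cancel (y s (e j')) (ρ (e j') • y (s - 1) (e j')), map_add,
        hp' _ (Submodule.subset_span (Or.inl ⟨j', rfl⟩)), map_smul,
        hpast (s - 1) (by omega) (by omega) j', smul_zero, add_zero]
    · exact hp' _ (Submodule.subset_span (Or.inr ⟨s, j', h3, h2, rfl⟩))

end Projection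

section ConditionalIndependence

variable {Ω : Type*} {m : MeasurableSpace Ω} [mΩ : MeasurableSpace Ω] {μ : Measure Ω}

/-- If `X - φ(V)` is independent of `V`, the conditional law of `X` given `V = v` is the law of
`φ(v) + (X - φ(V))`. -/
lemma condDistrib_ae_eq_of_indepFun_sub [IsProbabilityMeasure μ] {E γ : Type*} [AddCommGroup E]
    [MeasurableSpace E] [MeasurableAdd₂ E] [MeasurableSub₂ E] [StandardBorelSpace E] [Nonempty E]
    [MeasurableSpace γ] {X : Ω → E} {V : Ω → γ} {φ : γ → E} (hX : Measurable X)
    (hV : Measurable V) (hφ : Measurable φ)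
    (h : IndepFun V (fun ω => X ω - φ (V ω)) μ) :
    condDistrib X V μ =ᵐ[μ.map V]
      (Kernel.deterministic φ hφ ×ₖ Kernel.const γ (μ.map fun ω => X ω - φ (V ω))).map
        (fun p => p.1 + p.2) := by
  have hR : Measurable fun ω => X ω - φ (V ω) := hX.sub (hφ.comp hV)
  have : IsProbabilityMeasure (μ.map fun ω => X ω - φ (V ω)) :=
    Measure.isProbabilityMeasure_map hR.aemeasurable
  have : IsProbabilityMeasure (μ.map V) := Measure.isProbabilityMeasure_map hV.aemeasurable
  refine condDistrib_ae_eq_of_measure_eq_compProd V hX.aemeasurable ?_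
  have hg : Measurable fun p : γ × E => (p.1, φ p.1 + p.2) :=
    measurable_fst.prodMk ((hφ.comp measurable_fst).add measurable_snd)
  have hmap : μ.map (fun ω => (V ω, X ω)) =
      ((μ.map V).prod (μ.map fun ω => X ω - φ (V ω))).map (fun p => (p.1, φ p.1 + p.2)) := by
    rw [← (indepFun_iff_map_prod_eq_prod_map_map hV.aemeasurable hR.aemeasurable).1 h,
      Measure.map_map hg (hV.prodMk hR)]
    congr 1
    ext ω <;> simp
  rw [hmap]
  ext s hs
  rw [Measure.map_apply hg hs, Measure.prod_apply (hg hs), Measure.compProd_apply hs]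
  refine lintegral_congr fun c => ?_
  have hs' : MeasurableSet (Prod.mk c ⁻¹' s) := measurable_prodMk_left hs
  rw [Kernel.map_apply' _ (by fun_prop) _ hs',
    Kernel.prod_apply, Kernel.deterministic_apply, Kernel.const_apply, Measure.dirac_prod,
    Measure.map_apply (by fun_prop) (measurable_add hs')]
  rfl

/-- If `X - φ(W)` is independent of `(W, Z)`, then `X` is conditionally independent of `Z`
given `W`. -/
lemma condIndepFun_of_indepFun_sub [StandardBorelSpace Ω] [IsProbabilityMeasure μ]
    {E F γ : Type*} [AddCommGroup E]
    [MeasurableSpace E] [MeasurableAdd₂ E] [MeasurableSub₂ E] [StandardBorelSpace E]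
    [MeasurableSpace F] [StandardBorelSpace F] [Nonempty F]
    [MeasurableSpace γ] {X : Ω → E} {W : Ω → γ} {Z : Ω → F} {φ : γ → E} (hX : Measurable X)
    (hW : Measurable W) (hZ : Measurable Z) (hφ : Measurable φ)
    (h : IndepFun (fun ω => (W ω, Z ω)) (fun ω => X ω - φ (W ω)) μ) :
    CondIndepFun (MeasurableSpace.comap W inferInstance) hW.comap_le X Z μ := by
  refine CondIndepFun.symm
    ((condIndepFun_iff_condDistrib_prod_ae_eq_prodMkRight hX hZ hW).2 ?_)
  have h1 := condDistrib_ae_eq_of_indepFun_sub (V := fun ω => (W ω, Z ω))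
    (φ := fun p => φ p.1) hX (hW.prodMk hZ) (hφ.comp measurable_fst) h
  have h2 := condDistrib_ae_eq_of_indepFun_sub hX hW hφ (h.comp measurable_fst measurable_id)
  have hfst : (μ.map fun ω => (W ω, Z ω)).map Prod.fst = μ.map W :=
    Measure.map_map measurable_fst (hW.prodMk hZ)
  rw [← hfst] at h2
  filter_upwards [h1, ae_of_ae_map measurable_fst.aemeasurable h2] with p hp1 hp2
  rw [hp1, Kernel.prodMkRight_apply, hp2, Kernel.map_apply _ (by fun_prop),
    Kernel.map_apply _ (by fun_prop), Kernel.prod_apply, Kernel.prod_apply,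
    Kernel.deterministic_apply, Kernel.deterministic_apply, Kernel.const_apply, Kernel.const_apply]

/-- If `X` and `Z` are conditionally independent given `m` and the `m`-measurable variable `ξ` is
such that `X - ξ` is centered and independent of `m`, then `X - ξ` and `Z` are uncorrelated. -/
lemma integral_sub_mul_eq_zero_of_condIndepFun [StandardBorelSpace Ω] [IsProbabilityMeasure μ]
    (hm : m ≤ mΩ) {X Z ξ : Ω → ℝ} (hX : Measurable X) (hZ : Measurable Z)
    (hξ : Measurable[m] ξ) (hX2 : MemLp X 2 μ) (hZ2 : MemLp Z 2 μ) (hξ2 : MemLp ξ 2 μ)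
    (hcond : CondIndepFun m hm X Z μ)
    (hmean : ∫ ω, (X ω - ξ ω) ∂μ = 0)
    (hind : Indep (MeasurableSpace.comap (fun ω => X ω - ξ ω) inferInstance) m μ) :
    ∫ ω, (X ω - ξ ω) * Z ω ∂μ = 0 := by
  have hXi := hX2.integrable one_le_two
  have hZi := hZ2.integrable one_le_two
  have hξi := hξ2.integrable one_le_two
  have hXZ : Integrable (X * Z) μ := hX2.integrable_mul hZ2
  have hξZ : Integrable (ξ * Z) μ := hξ2.integrable_mul hZ2
  have hR : Measurable fun ω => X ω - ξ ω := hX.sub (hξ.mono hm le_rfl)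
  have hcondX : μ[X | m] =ᵐ[μ] ξ := by
    have h1 := condExp_indep_eq hR.comap_le hm
      (comap_measurable fun ω => X ω - ξ ω).stronglyMeasurable hind
    have h2 : μ[fun ω => X ω - ξ ω | m] =ᵐ[μ] μ[X | m] - μ[ξ | m] := condExp_sub hXi hξi m
    have h3 : μ[ξ | m] = ξ := condExp_of_stronglyMeasurable hm hξ.stronglyMeasurable hξi
    filter_upwards [h1, h2] with ω h1 h2
    rw [h1, hmean, Pi.sub_apply, h3] at h2
    linarith
  have hprod : μ[X * Z | m] =ᵐ[μ] μ[X | m] * μ[Z | m] := by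
    have hae := ae_of_ae_trim hm ((condIndepFun_iff_map_prod_eq_prod_map_map hX hZ).1 hcond)
    filter_upwards [hae, condExp_ae_eq_integral_condExpKernel hm hXZ,
      condExp_ae_eq_integral_condExpKernel hm hXi,
      condExp_ae_eq_integral_condExpKernel hm hZi] with ω h1 h2 h3 h4
    rw [Pi.mul_apply, h2, h3, h4]
    rw [Kernel.map_apply _ (hX.prodMk hZ), Kernel.prod_apply, Kernel.map_apply _ hX,
      Kernel.map_apply _ hZ] at h1
    exact ((indepFun_iff_map_prod_eq_prod_map_map hX.aemeasurable hZ.aemeasurable).2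
      h1).integral_mul_eq_mul_integral hX.aestronglyMeasurable hZ.aestronglyMeasurable
  have hpull := condExp_mul_of_stronglyMeasurable_left hξ.stronglyMeasurable hξZ hZi
  have hkey : μ[X * Z | m] =ᵐ[μ] μ[ξ * Z | m] :=
    hprod.trans ((hcondX.mul (ae_eq_refl _)).trans hpull.symm)
  have hint := integral_congr_ae hkey
  rw [integral_condExp hm, integral_condExp hm] at hint
  simp_rw [sub_mul]
  exact (integral_sub hXZ hξZ).trans (sub_eq_zero.2 hint)

end ConditionalIndependence

section Gaussian

open Matrix

variable {Ω κ : Type*} [Fintype κ] {m : MeasurableSpace Ω} [mΩ : MeasurableSpace Ω]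
  {μ : Measure Ω} {F : Ω → κ → ℝ}

lemma IsGaussianVec.hasGaussianLaw_s8 (h : IsGaussianVec μ F) (hF : Measurable F) :
    HasGaussianLaw F μ := by
  classical
  refine ⟨isGaussian_of_map_eq_gaussianReal fun L => ?_⟩
  obtain ⟨a, s, hs⟩ := h fun q => L (Pi.single q 1)
  refine ⟨a, s, ?_⟩
  rw [← hs, Measure.map_map L.continuous.measurable hF]
  congr 1
  ext ω
  have hsum : F ω = ∑ q, F ω q • (Pi.single q 1 : κ → ℝ) := by
    ext q
    simp [Finset.sum_apply, Pi.single_apply]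
  rw [Function.comp_apply, hsum, map_sum]
  refine Finset.sum_congr rfl fun q _ => ?_
  rw [map_smul, smul_eq_mul, mul_comm, ← hsum]

lemma memLp_two_dotProduct (hG : HasGaussianLaw F μ) (a : κ → ℝ) :
    MemLp (fun ω => a ⬝ᵥ F ω) 2 μ := by
  have hcoord : ∀ q, MemLp (fun ω => F ω q) 2 μ := fun q =>
    (HasGaussianLaw.eval (X := fun q ω => F ω q) hG q).memLp_two
  exact memLp_finsetSum _ fun q _ => (hcoord q).const_mul (a q)

lemma integral_dotProduct_eq_zero (hG : HasGaussianLaw F μ) (hmean : ∀ q, ∫ ω, F ω q ∂μ = 0)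
    (a : κ → ℝ) : ∫ ω, a ⬝ᵥ F ω ∂μ = 0 := by
  have hcoord : ∀ q, Integrable (fun ω => F ω q) μ := fun q =>
    (HasGaussianLaw.eval (X := fun q ω => F ω q) hG q).integrable
  simp only [dotProduct]
  rw [integral_finsetSum _ fun q _ => (hcoord q).const_mul (a q)]
  simp [integral_const_mul, hmean]

lemma integral_dotProduct_mul_dotProduct (hG : HasGaussianLaw F μ)
    (hmean : ∀ q, ∫ ω, F ω q ∂μ = 0) (a b : κ → ℝ) :
    ∫ ω, (a ⬝ᵥ F ω) * (b ⬝ᵥ F ω) ∂μ = a ⬝ᵥ covM μ F F *ᵥ b := by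
  have hcoord : ∀ q, MemLp (fun ω => F ω q) 2 μ := fun q =>
    (HasGaussianLaw.eval (X := fun q ω => F ω q) hG q).memLp_two
  have hint : ∀ q r, Integrable (fun ω => a q * F ω q * (b r * F ω r)) μ := fun q r =>
    ((hcoord q).const_mul (a q)).integrable_mul ((hcoord r).const_mul (b r))
  simp only [dotProduct, mulVec, Finset.sum_mul_sum]
  rw [integral_finsetSum _ fun q _ => integrable_finsetSum _ fun r _ => hint q r]
  refine Finset.sum_congr rfl fun q _ => ?_
  rw [integral_finsetSum _ fun r _ => hint q r, Finset.mul_sum]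
  refine Finset.sum_congr rfl fun r _ => ?_
  rw [covM, Matrix.of_apply, hmean, zero_mul, sub_zero]
  have hcomm : ∀ ω, a q * F ω q * (b r * F ω r) = a q * b r * (F ω q * F ω r) := fun ω => by ring
  simp_rw [hcomm]
  rw [integral_const_mul]
  ring

/-- Uncorrelated families of linear combinations of a Gaussian vector are independent. -/
lemma indepFun_dotProduct [IsProbabilityMeasure μ] (hG : HasGaussianLaw F μ) (hmean : ∀ q, ∫ ω, F ω q ∂μ = 0)
    {ι ι' : Type*} [Finite ι] [Finite ι'] (a : ι → κ → ℝ) (b : ι' → κ → ℝ)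
    (hab : ∀ i j, a i ⬝ᵥ covM μ F F *ᵥ b j = 0) :
    IndepFun (fun ω i => a i ⬝ᵥ F ω) (fun ω j => b j ⬝ᵥ F ω) μ := by
  have := Fintype.ofFinite ι
  have := Fintype.ofFinite ι'
  let L : (κ → ℝ) →ₗ[ℝ] (ι → ℝ) × (ι' → ℝ) :=
    (Matrix.mulVecLin (Matrix.of a)).prod (Matrix.mulVecLin (Matrix.of b))
  refine HasGaussianLaw.indepFun_of_covariance_eval (X := fun i ω => a i ⬝ᵥ F ω)
    (Y := fun j ω => b j ⬝ᵥ F ω) (hG.map_fun L.toContinuousLinearMap) fun i j => ?_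
  rw [covariance_eq_sub (memLp_two_dotProduct hG _) (memLp_two_dotProduct hG _),
    integral_dotProduct_eq_zero hG hmean, zero_mul, sub_zero]
  exact (integral_dotProduct_mul_dotProduct hG hmean _ _).trans (hab i j)

/-- If the best linear predictors of `X` given `W` and `Z` only involve `W`, then `X` and `Z` are
conditionally independent given `W`. -/
lemma condIndepFun_of_linear_predictor [StandardBorelSpace Ω] [IsProbabilityMeasure μ]
    (hG : HasGaussianLaw F μ)
    (hmean : ∀ q, ∫ ω, F ω q ∂μ = 0) {ι ι' ι'' : Type*} [Finite ι] [Finite ι'] [Finite ι'']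
    {X : Ω → ι → ℝ} {W : Ω → ι' → ℝ} {Z : Ω → ι'' → ℝ} (hXm : Measurable X) (hWm : Measurable W)
    (hZm : Measurable Z) {x : ι → κ → ℝ} {w : ι' → κ → ℝ} {z : ι'' → κ → ℝ}
    (hX : ∀ ω i, X ω i = x i ⬝ᵥ F ω) (hW : ∀ ω i, W ω i = w i ⬝ᵥ F ω)
    (hZ : ∀ ω i, Z ω i = z i ⬝ᵥ F ω)
    (h : ∀ i, ∃ p ∈ Submodule.span ℝ (Set.range w),
      (∀ j, (x i - p) ⬝ᵥ covM μ F F *ᵥ w j = 0) ∧ ∀ j, (x i - p) ⬝ᵥ covM μ F F *ᵥ z j = 0) :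
    CondIndepFun (MeasurableSpace.comap W inferInstance) hWm.comap_le X Z μ := by
  have := Fintype.ofFinite ι'
  choose p hp hpw hpz using h
  choose c hc using fun i => (Submodule.mem_span_range_iff_exists_fun ℝ).1 (hp i)
  have hφ : Measurable fun (u : ι' → ℝ) (i : ι) => ∑ j, c i j * u j := by fun_prop
  refine condIndepFun_of_indepFun_sub hXm hWm hZm hφ ?_
  have hR : (fun ω => X ω - fun i => ∑ j, c i j * W ω j) = fun ω i => (x i - p i) ⬝ᵥ F ω := by
    ext ω i
    rw [Pi.sub_apply, hX, sub_dotProduct, ← hc, sum_dotProduct]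
    simp_rw [smul_dotProduct, hW, smul_eq_mul]
  rw [hR]
  have hind := (indepFun_dotProduct hG hmean (fun i => x i - p i) (Sum.elim w z) (by
    rintro i (j | j)
    · exact hpw i j
    · exact hpz i j)).symm
  have hg : Measurable fun u : ι' ⊕ ι'' → ℝ => (fun j => u (Sum.inl j), fun j => u (Sum.inr j)) := by
    fun_prop
  have hWZ : (fun ω => (W ω, Z ω)) = (fun u : ι' ⊕ ι'' → ℝ =>
      (fun j => u (Sum.inl j), fun j => u (Sum.inr j))) ∘
        fun ω j => Sum.elim w z j ⬝ᵥ F ω := by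
    ext ω j
    · exact hW ω j
    · exact hZ ω j
  rw [hWZ]
  exact hind.comp hg measurable_id

/-- Conditional independence given `W` makes the residual of the best linear predictor given `W`
uncorrelated with the other variable. -/
lemma residual_uncorrelated_of_condIndepFun [StandardBorelSpace Ω] [IsProbabilityMeasure μ]
    (hG : HasGaussianLaw F μ)
    (hFm : Measurable F) (hmean : ∀ q, ∫ ω, F ω q ∂μ = 0) {ι : Type*} [Finite ι]
    {W : Ω → ι → ℝ} {X Z : Ω → ℝ} {hm : m ≤ mΩ} (hmW : m = MeasurableSpace.comap W inferInstance)
    {w : ι → κ → ℝ} {x z p : κ → ℝ} (hX : ∀ ω, X ω = x ⬝ᵥ F ω) (hW : ∀ ω i, W ω i = w i ⬝ᵥ F ω)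
    (hZ : ∀ ω, Z ω = z ⬝ᵥ F ω) (hcond : CondIndepFun m hm X Z μ)
    (hp : p ∈ Submodule.span ℝ (Set.range w))
    (hpw : ∀ i, (x - p) ⬝ᵥ covM μ F F *ᵥ w i = 0) :
    (x - p) ⬝ᵥ covM μ F F *ᵥ z = 0 := by
  have := Fintype.ofFinite ι
  obtain rfl : X = fun ω => x ⬝ᵥ F ω := funext hX
  obtain rfl : Z = fun ω => z ⬝ᵥ F ω := funext hZ
  obtain rfl : W = fun ω i => w i ⬝ᵥ F ω := funext fun ω => funext (hW ω)
  have hmeas : ∀ a : κ → ℝ, Measurable fun ω => a ⬝ᵥ F ω := fun a =>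
    Finset.measurable_sum _ fun q _ => ((measurable_pi_apply q).comp hFm).const_mul (a q)
  obtain ⟨c, hc⟩ := (Submodule.mem_span_range_iff_exists_fun ℝ).1 hp
  have hpm : Measurable[m] fun ω => p ⬝ᵥ F ω := by
    have hφ : Measurable fun u : ι → ℝ => ∑ j, c j * u j := by fun_prop
    have : (fun ω => p ⬝ᵥ F ω) = (fun u : ι → ℝ => ∑ j, c j * u j) ∘
        fun ω i => w i ⬝ᵥ F ω := by
      ext ω
      rw [← hc, sum_dotProduct]
      simp_rw [smul_dotProduct, smul_eq_mul]
      rfl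
    rw [this, hmW]
    exact hφ.comp (comap_measurable _)
  have hsub : ∀ ω, x ⬝ᵥ F ω - p ⬝ᵥ F ω = (x - p) ⬝ᵥ F ω := fun ω => (sub_dotProduct _ _ _).symm
  rw [← integral_dotProduct_mul_dotProduct hG hmean]
  simp_rw [← hsub]
  refine integral_sub_mul_eq_zero_of_condIndepFun hm (hmeas x) (hmeas z) hpm
    (memLp_two_dotProduct hG x) (memLp_two_dotProduct hG z) (memLp_two_dotProduct hG p) hcond ?_ ?_
  · simp_rw [hsub]
    exact integral_dotProduct_eq_zero hG hmean _
  · have hind := indepFun_dotProduct hG hmean (fun _ : Unit => x - p) w fun _ => hpw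
    simp_rw [hsub, hmW]
    exact hind.comp (measurable_pi_apply ()) measurable_id

end Gaussian

/-- Proposition 1 of the paper, closure-under-margins part. Under the
within-regime Markov-order-(k−1) condition for the sub-process indexed by the nonempty subset
`I ⊆ {1,…,d}` (encoded by an injective `e : Fin m → Fin d`, `m ≥ 1`) and the regime-switching
Conditions 3(a)–(c) for the full process with diagonal `P`, the sub-process
`Y_{I,1}, …, Y_{I,T}` is Markov of order `k`. -/
theorem margin_closed_regime_switching_closure_under_margins
    {Ω : Type*} [MeasurableSpace Ω] [StandardBorelSpace Ω]
    (Pr : Measure Ω) [IsProbabilityMeasure Pr]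
    (d G T k : ℕ) (hd : 0 < d) (hG : 0 < G) (hk : 0 < k) (hT : k + 2 ≤ T)
    (v : ℕ → Fin G)
    (ρ : Fin d → ℝ) (hρ : ∀ i, ρ i ∈ Set.Ioo (-1 : ℝ) 1)
    {m : ℕ} (hm : 0 < m) (e : Fin m → Fin d) (he : Function.Injective e)
    (Y : ℕ → Ω → Fin d → ℝ) (hYm : ∀ t, Measurable (Y t))
    (hGauss : IsGaussianVec Pr
      (fun ω (q : Fin T × Fin d) => Y ((q.1 : ℕ) + 1) ω q.2))
    (hmean : ∀ t, 1 ≤ t → t ≤ T → ∀ i, ∫ ω, Y t ω i ∂Pr = 0)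
    (hposdef : (covM Pr (fun ω (q : Fin T × Fin d) => Y ((q.1 : ℕ) + 1) ω q.2)
        (fun ω (q : Fin T × Fin d) => Y ((q.1 : ℕ) + 1) ω q.2)).PosDef)
    -- (i) within-regime Markov order k − 1 for the sub-process
    (hwithin : ∀ t l, t ≤ T → k ≤ l → l + 1 ≤ t →
      (∀ s, t - l ≤ s → s ≤ t → v s = v t) →
      CondIndepFun
        (MeasurableSpace.comap
          (fun ω (p : Fin (k - 1) × Fin m) => Y (t - k + 1 + (p.1 : ℕ)) ω (e p.2))
          inferInstance)
        ((measurable_pi_lambda _ fun p : _ × Fin m => (measurable_pi_apply (e p.2)).comp (hYm _)).comap_le)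
        (fun ω (j : Fin m) => Y t ω (e j))
        (fun ω (p : Fin (l - k + 1) × Fin m) => Y (t - l + (p.1 : ℕ)) ω (e p.2)) Pr)
    -- (ii)(a)
    (hswitchA : ∀ tstar, 2 ≤ tstar → tstar ≤ T → v tstar ≠ v (tstar - 1) →
      covM Pr (Y tstar) (Y (tstar - 1))
        = Matrix.diagonal ρ * covM Pr (Y (tstar - 1)) (Y (tstar - 1)))
    -- (ii)(b)
    (hswitchB : ∀ tstar, 2 ≤ tstar → tstar ≤ T → v tstar ≠ v (tstar - 1) →
      ∀ s, 1 ≤ s → s + 2 ≤ tstar →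
      CondIndepFun (MeasurableSpace.comap (Y (tstar - 1)) inferInstance)
        ((hYm _).comap_le) (Y tstar) (Y s) Pr)
    -- (ii)(c)
    (hswitchC : ∀ tstar, 2 ≤ tstar → tstar ≤ T → v tstar ≠ v (tstar - 1) →
      ∀ j, 1 ≤ j → tstar + j ≤ T → ∀ s, 1 ≤ s → s + 1 ≤ tstar →
      covM Pr (Y (tstar + j)) (Y s) = 0) :
    -- conclusion: the sub-process is Markov of order k
    ∀ t, k + 2 ≤ t → t ≤ T →
      CondIndepFun
        (MeasurableSpace.comap
          (fun ω (p : Fin k × Fin m) => Y (t - k + (p.1 : ℕ)) ω (e p.2)) inferInstance)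
        ((measurable_pi_lambda _ fun p : _ × Fin m => (measurable_pi_apply (e p.2)).comp (hYm _)).comap_le)
        (fun ω (j : Fin m) => Y t ω (e j))
        (fun ω (p : Fin (t - k - 1) × Fin m) => Y ((p.1 : ℕ) + 1) ω (e p.2)) Pr := by
  intro t hkt htT
  classical
  set F : Ω → Fin T × Fin d → ℝ := fun ω q => Y ((q.1 : ℕ) + 1) ω q.2 with hF
  have hFm : Measurable F := measurable_pi_lambda _ fun q => (measurable_pi_apply q.2).comp (hYm _)
  have hG : HasGaussianLaw F Pr := hGauss.hasGaussianLaw_s8 hFm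
  have hmeanF : ∀ q, ∫ ω, F ω q ∂Pr = 0 := fun q => hmean _ (by omega) (by omega) _
  obtain ⟨y, hy⟩ : ∃ y : ℕ → Fin d → Fin T × Fin d → ℝ, ∀ s i, 1 ≤ s → s ≤ T → ∀ ω,
      Y s ω i = y s i ⬝ᵥ F ω := by
    refine ⟨fun s i q => if (q.1 : ℕ) + 1 = s ∧ q.2 = i then 1 else 0, fun s i h1 h2 ω => ?_⟩
    have hsingle : (fun q : Fin T × Fin d => if (q.1 : ℕ) + 1 = s ∧ q.2 = i then (1 : ℝ) else 0) =
        Pi.single (⟨s - 1, by omega⟩, i) 1 := by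
      ext ⟨a, b⟩
      rw [Pi.single_apply]
      refine if_congr ?_ rfl rfl
      simp only [Prod.mk.injEq, Fin.ext_iff]
      omega
    dsimp only
    rw [hsingle, single_one_dotProduct, hF]
    dsimp only
    rw [Nat.sub_add_cancel h1]
  set B := Matrix.toBilin' (covM Pr F F) with hB
  have hBapp : ∀ a b, B a b = a ⬝ᵥ Matrix.mulVec (covM Pr F F) b := Matrix.toBilin'_apply' _
  have hcov : ∀ r s i i', 1 ≤ r → r ≤ T → 1 ≤ s → s ≤ T →
      B (y r i) (y s i') = covM Pr (Y r) (Y s) i i' := by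
    intro r s i i' h1 h2 h3 h4
    rw [hBapp, ← integral_dotProduct_mul_dotProduct hG hmeanF, covM, Matrix.of_apply,
      hmean r h1 h2, zero_mul, sub_zero]
    simp_rw [hy r i h1 h2, hy s i' h3 h4]
  have hproj := exists_mem_forall_form_sub_eq_zero B
    ⟨fun a b => by
      simp only [hBapp, ← integral_dotProduct_mul_dotProduct hG hmeanF, mul_comm]⟩
    (fun x hx => by simpa only [hBapp, star_trivial] using hposdef.dotProduct_mulVec_pos hx)
  have hlag : ∀ τ, 2 ≤ τ → τ ≤ T → v τ ≠ v (τ - 1) → ∀ i i',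
      B (y τ i - ρ i • y (τ - 1) i) (y (τ - 1) i') = 0 := by
    intro τ h2 hτT hsw i i'
    rw [map_sub, LinearMap.sub_apply, map_smul, LinearMap.smul_apply, smul_eq_mul,
      hcov _ _ _ _ (by omega) hτT (by omega) (by omega),
      hcov _ _ _ _ (by omega) (by omega) (by omega) (by omega), hswitchA τ h2 hτT hsw,
      Matrix.diagonal_mul, sub_self]
  have hpred := exists_predictor_of_regime_switching B hproj y v ρ T k hk e ?_ ?_ ?_ t hkt htT
  · have hW : ∀ ω (p : Fin k × Fin m),
        Y (t - k + (p.1 : ℕ)) ω (e p.2) = y (t - k + (p.1 : ℕ)) (e p.2) ⬝ᵥ F ω :=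
      fun ω p => hy _ _ (by omega) (by omega) ω
    have hZ : ∀ ω (p : Fin (t - k - 1) × Fin m),
        Y ((p.1 : ℕ) + 1) ω (e p.2) = y ((p.1 : ℕ) + 1) (e p.2) ⬝ᵥ F ω :=
      fun ω p => hy _ _ (by omega) (by omega) ω
    have hX : ∀ ω j, Y t ω (e j) = y t (e j) ⬝ᵥ F ω := fun ω j => hy _ _ (by omega) htT ω
    have hXm : Measurable fun ω (j : Fin m) => Y t ω (e j) :=
      measurable_pi_lambda _ fun j => (measurable_pi_apply (e j)).comp (hYm _)
    have hWm : Measurable fun ω (p : Fin k × Fin m) => Y (t - k + (p.1 : ℕ)) ω (e p.2) :=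
      measurable_pi_lambda _ fun p => (measurable_pi_apply (e p.2)).comp (hYm _)
    have hZm : Measurable fun ω (p : Fin (t - k - 1) × Fin m) => Y ((p.1 : ℕ) + 1) ω (e p.2) :=
      measurable_pi_lambda _ fun p => (measurable_pi_apply (e p.2)).comp (hYm _)
    refine condIndepFun_of_linear_predictor hG hmeanF hXm hWm hZm hX hW hZ fun j => ?_
    obtain ⟨p, hp, hp'⟩ := hpred j
    refine ⟨p, Submodule.span_mono ?_ hp, fun q => ?_, fun q => ?_⟩
    · rintro _ ⟨s, j', h1, h2, rfl⟩
      exact ⟨(⟨s - (t - k), by omega⟩, j'), by simp only [Nat.add_sub_cancel' h1]⟩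
    · rw [← hBapp]
      exact hp' _ (by omega) (by omega) _
    · rw [← hBapp]
      exact hp' _ (by omega) (by omega) _
  · intro τ h2 hτT hsw i s i' h1 hsτ
    rcases Nat.lt_or_ge s (τ - 1) with h3 | h3
    · rw [hBapp]
      refine residual_uncorrelated_of_condIndepFun hG hFm hmeanF rfl
        (hy τ i (by omega) hτT) (fun ω i'' => hy (τ - 1) i'' (by omega) (by omega) ω)
        (hy s i' h1 (by omega))
        ((hswitchB τ h2 hτT hsw s h1 (by omega)).comp (measurable_pi_apply i)
          (measurable_pi_apply i'))
        (Submodule.smul_mem _ _ (Submodule.subset_span ⟨i, rfl⟩)) fun i'' => ?_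
      rw [← hBapp]
      exact hlag τ h2 hτT hsw i i''
    · obtain rfl : s = τ - 1 := by omega
      exact hlag τ h2 hτT hsw i i'
  · intro τ h2 hτT hsw r hr hrT s h1 hsτ i i'
    rw [hcov _ _ _ _ (by omega) hrT h1 (by omega)]
    have h3 := hswitchC τ h2 hτT hsw (r - τ) (by omega) (by omega) s h1 hsτ
    rw [Nat.add_sub_cancel' hr.le] at h3
    rw [h3, Matrix.zero_apply]
  · intro t l htT hkl hlt hconst j
    set w : Fin (k - 1) × Fin m → Fin T × Fin d → ℝ :=
      fun p => y (t - k + 1 + (p.1 : ℕ)) (e p.2) with hw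
    obtain ⟨p, hp, hp'⟩ := hproj (Submodule.span ℝ (Set.range w)) (y t (e j))
    refine ⟨p, Submodule.span_mono ?_ hp, fun s h1 h2 j' => ?_⟩
    · rintro _ ⟨q, rfl⟩
      exact ⟨_, _, by omega, by omega, rfl⟩
    rcases Nat.lt_or_ge s (t - k + 1) with h3 | h3
    · obtain ⟨a, rfl⟩ := Nat.exists_eq_add_of_le h1
      have hcond := (hwithin t l htT hkl hlt hconst).comp (measurable_pi_apply j)
        (measurable_pi_apply ((⟨a, by omega⟩, j') : Fin (l - k + 1) × Fin m))
      rw [hBapp]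
      refine residual_uncorrelated_of_condIndepFun hG hFm hmeanF (w := w) rfl
        (hy t (e j) (by omega) htT) (fun ω q => hy _ _ (by omega) (by omega) ω)
        (hy (t - l + a) (e j') (by omega) (by omega)) hcond hp fun q => ?_
      rw [← hBapp]
      exact hp' _ (Submodule.subset_span ⟨q, rfl⟩)
    · refine hp' _ (Submodule.subset_span ⟨(⟨s - (t - k + 1), by omega⟩, j'), ?_⟩)
      simp only [hw, Nat.add_sub_cancel' h3]
end
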